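/- Let f₁, …, f_m : ℝ^d → ℝ be differentiable, with each f_i L_i-Lipschitz and each ∇f_i M_i-Lipschitz, and set L_max := max_{1≤i≤m} L_i. Let x₀ satisfy f_i(x₀) < 0 for all i, let l* := min_{1≤i≤m} (−f_i(x₀))/L_max and ν* := 2 l*/√d, and for each i define S_i°(x₀) := {x ∈ ℝ^d : f_i(x₀) + ⟨∇^{ν*} f_i(x₀), x − x₀⟩ + 2 M_i ‖x − x₀‖² ≤ 0}. Then ⋂_{i=1}^m S_i°(x₀) ⊆ Ω, where Ω := {x ∈ ℝ^d : f_i(x) ≤ 0 for all i = 1, …, m}. -/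

import Mathlib

open RealInnerProductSpace

/-- Forward-difference gradient estimator `∇^ν f(x) := Σ_j ((f(x + ν e_j) − f(x))/ν) e_j`. -/
noncomputable def fdGrad (d : ℕ) (f : EuclideanSpace ℝ (Fin d) → ℝ)
    (x : EuclideanSpace ℝ (Fin d)) (ν : ℝ) : EuclideanSpace ℝ (Fin d) :=
  ∑ j : Fin d, ((f (x + ν • EuclideanSpace.single j (1 : ℝ)) - f x) / ν) •
    EuclideanSpace.single j (1 : ℝ)

/-!
Fix a constraint `f` and put `r = ‖x - x₀‖`. If `r ≤ l*`, then `f x ≤ f x₀ + L_max r ≤ 0` by the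
Lipschitz bound. If `r ≥ l*`, then the error of the forward-difference gradient is at most
`√d M ν* / 2 = M l* ≤ M r`, so replacing `∇f(x₀)` by the estimate in the quadratic upper bound
`f x ≤ f x₀ + ⟪∇f(x₀), x - x₀⟫ + M r² / 2` costs at most `M r²`: the total `3 M r² / 2` is below
the `2 M r²` in the definition of the safe set.
-/

section Taylor

variable {E F : Type*} [NormedAddCommGroup E] [NormedSpace ℝ E]
  [NormedAddCommGroup F] [NormedSpace ℝ F]

theorem norm_sub_sub_fderiv_le_of_norm_fderiv_sub_le {f : E → F} {M : ℝ} {x : E}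
    (hf : Differentiable ℝ f) (hM : ∀ y, ‖fderiv ℝ f y - fderiv ℝ f x‖ ≤ M * ‖y - x‖) (y : E) :
    ‖f y - f x - fderiv ℝ f x (y - x)‖ ≤ M / 2 * ‖y - x‖ ^ 2 := by
  let γ : ℝ → E := AffineMap.lineMap x y
  let remainder : ℝ → F := fun t ↦ f (γ t) - f x - t • fderiv ℝ f x (y - x)
  have hremainder (t : ℝ) :
      HasDerivAt remainder ((fderiv ℝ f (γ t) - fderiv ℝ f x) (y - x)) t := by
    have hγ : HasDerivAt (f ∘ γ) (fderiv ℝ f (γ t) (y - x)) t :=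
      (hf (γ t)).hasFDerivAt.comp_hasDerivAt t AffineMap.hasDerivAt_lineMap
    exact ((hγ.sub_const (f x)).sub
      ((hasDerivAt_id t).smul_const (fderiv ℝ f x (y - x)))).congr_deriv (by simp)
  have hbound (t : ℝ) :
      HasDerivAt (fun t ↦ M / 2 * ‖y - x‖ ^ 2 * t ^ 2) (M * ‖y - x‖ ^ 2 * t) t :=
    ((hasDerivAt_pow 2 t).const_mul (M / 2 * ‖y - x‖ ^ 2)).congr_deriv (by push_cast; ring)
  have hderiv_le (t : ℝ) (ht : t ∈ Set.Ico (0 : ℝ) 1) :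
      ‖(fderiv ℝ f (γ t) - fderiv ℝ f x) (y - x)‖ ≤ M * ‖y - x‖ ^ 2 * t := by
    have hγ : ‖γ t - x‖ = t * ‖y - x‖ := by
      simp [γ, AffineMap.lineMap_apply, norm_smul, abs_of_nonneg ht.1]
    calc ‖(fderiv ℝ f (γ t) - fderiv ℝ f x) (y - x)‖
        ≤ ‖fderiv ℝ f (γ t) - fderiv ℝ f x‖ * ‖y - x‖ := ContinuousLinearMap.le_opNorm _ _
      _ ≤ M * ‖γ t - x‖ * ‖y - x‖ := by gcongr; exact hM (γ t)
      _ = M * ‖y - x‖ ^ 2 * t := by rw [hγ]; ring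
  have hle := image_norm_le_of_norm_deriv_right_le_deriv_boundary
    (fun t _ ↦ (hremainder t).continuousAt.continuousWithinAt)
    (fun t _ ↦ (hremainder t).hasDerivWithinAt) (by simp [remainder, γ]) hbound hderiv_le
    (Set.right_mem_Icc.2 zero_le_one)
  simpa [remainder, γ] using hle

end Taylor

section Gradient

variable {E : Type*} [NormedAddCommGroup E] [InnerProductSpace ℝ E] [CompleteSpace E]
  {f : E → ℝ} {M : ℝ} {x : E}

theorem norm_fderiv_sub_fderiv_eq_norm_gradient_sub (f : E → ℝ) (x y : E) :
    ‖fderiv ℝ f y - fderiv ℝ f x‖ = ‖gradient f y - gradient f x‖ := by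
  rw [← toDual_gradient, ← toDual_gradient, ← map_sub, LinearIsometryEquiv.norm_map]

theorem abs_sub_sub_inner_gradient_le (hf : Differentiable ℝ f)
    (hM : ∀ y, ‖gradient f y - gradient f x‖ ≤ M * ‖y - x‖) (y : E) :
    |f y - f x - ⟪gradient f x, y - x⟫| ≤ M / 2 * ‖y - x‖ ^ 2 := by
  simp only [← norm_fderiv_sub_fderiv_eq_norm_gradient_sub] at hM
  simpa only [inner_gradient_left, Real.norm_eq_abs] using
    norm_sub_sub_fderiv_le_of_norm_fderiv_sub_le hf hM y

theorem le_add_inner_add_of_norm_gradient_sub_le (hf : Differentiable ℝ f)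
    (hM : ∀ y, ‖gradient f y - gradient f x‖ ≤ M * ‖y - x‖) (g y : E) :
    f y ≤ f x + ⟪g, y - x⟫ + ‖gradient f x - g‖ * ‖y - x‖ + M / 2 * ‖y - x‖ ^ 2 := by
  have htaylor := (abs_le.1 (abs_sub_sub_inner_gradient_le hf hM y)).2
  have hinexact := real_inner_le_norm (gradient f x - g) (y - x)
  rw [inner_sub_left] at hinexact
  linarith

end Gradient

theorem euclideanSpace_norm_le_sqrt_card_mul {𝕜 ι : Type*} [RCLike 𝕜] [Fintype ι]
    {v : EuclideanSpace 𝕜 ι} {c : ℝ} (hv : ∀ j, ‖v j‖ ≤ c) :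
    ‖v‖ ≤ √(Fintype.card ι) * c := by
  rcases isEmpty_or_nonempty ι with _ | ⟨⟨j⟩⟩
  · simp [EuclideanSpace.norm_eq]
  have hc : 0 ≤ c := (norm_nonneg _).trans (hv j)
  calc ‖v‖ = √(∑ j, ‖v j‖ ^ 2) := EuclideanSpace.norm_eq v
    _ ≤ √(∑ _j : ι, c ^ 2) := by gcongr with j; exact hv j
    _ = √(Fintype.card ι) * c := by simp [Real.sqrt_sq hc]

section ForwardDifference

variable {d : ℕ} {f : EuclideanSpace ℝ (Fin d) → ℝ} {M ν : ℝ} {x : EuclideanSpace ℝ (Fin d)}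

theorem fdGrad_apply (f : EuclideanSpace ℝ (Fin d) → ℝ) (x : EuclideanSpace ℝ (Fin d)) (ν : ℝ)
    (j : Fin d) :
    fdGrad d f x ν j = (f (x + ν • EuclideanSpace.single j (1 : ℝ)) - f x) / ν := by
  simp [fdGrad, Pi.single_apply]

theorem norm_gradient_sub_fdGrad_apply_le (hf : Differentiable ℝ f)
    (hM : ∀ y, ‖gradient f y - gradient f x‖ ≤ M * ‖y - x‖) (hν : ν ≠ 0) (j : Fin d) :
    ‖(gradient f x - fdGrad d f x ν) j‖ ≤ M / 2 * |ν| := by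
  let Δ : ℝ := f (x + ν • EuclideanSpace.single j (1 : ℝ)) - f x
  have htaylor : |Δ - ν * gradient f x j| ≤ M / 2 * |ν| ^ 2 := by
    simpa [Δ, inner_smul_right, norm_smul, EuclideanSpace.inner_single_right,
      -inner_gradient_left] using
      abs_sub_sub_inner_gradient_le hf hM (x + ν • EuclideanSpace.single j (1 : ℝ))
  have hquotient : (gradient f x - fdGrad d f x ν) j = -((Δ - ν * gradient f x j) / ν) := by
    rw [PiLp.sub_apply, fdGrad_apply]
    field_simp
    ring
  rw [hquotient, norm_neg, norm_div, Real.norm_eq_abs, Real.norm_eq_abs, div_le_iff₀ (abs_pos.2 hν)]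
  linarith

theorem norm_gradient_sub_fdGrad_le (hf : Differentiable ℝ f)
    (hM : ∀ y, ‖gradient f y - gradient f x‖ ≤ M * ‖y - x‖) (hν : ν ≠ 0) :
    ‖gradient f x - fdGrad d f x ν‖ ≤ √d * (M / 2 * |ν|) := by
  simpa only [Fintype.card_fin] using
    euclideanSpace_norm_le_sqrt_card_mul (norm_gradient_sub_fdGrad_apply_le hf hM hν)

theorem le_add_inner_fdGrad_add (hf : Differentiable ℝ f)
    (hM : ∀ y, ‖gradient f y - gradient f x‖ ≤ M * ‖y - x‖) (hν : ν ≠ 0)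
    {y : EuclideanSpace ℝ (Fin d)} (hy : √d * |ν| ≤ 2 * ‖y - x‖) :
    f y ≤ f x + ⟪fdGrad d f x ν, y - x⟫ + 3 / 2 * M * ‖y - x‖ ^ 2 := by
  rcases eq_or_ne y x with rfl | hyx
  · simp
  have hM_nonneg : 0 ≤ M :=
    nonneg_of_mul_nonneg_left ((norm_nonneg _).trans (hM y)) (norm_sub_pos_iff.2 hyx)
  have herror : ‖gradient f x - fdGrad d f x ν‖ ≤ M * ‖y - x‖ :=
    calc ‖gradient f x - fdGrad d f x ν‖ ≤ √d * (M / 2 * |ν|) :=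
          norm_gradient_sub_fdGrad_le hf hM hν
      _ = M / 2 * (√d * |ν|) := by ring
      _ ≤ M / 2 * (2 * ‖y - x‖) := by gcongr
      _ = M * ‖y - x‖ := by ring
  calc f y ≤ f x + ⟪fdGrad d f x ν, y - x⟫ + ‖gradient f x - fdGrad d f x ν‖ * ‖y - x‖
        + M / 2 * ‖y - x‖ ^ 2 := le_add_inner_add_of_norm_gradient_sub_le hf hM _ y
    _ ≤ f x + ⟪fdGrad d f x ν, y - x⟫ + M * ‖y - x‖ * ‖y - x‖ + M / 2 * ‖y - x‖ ^ 2 := by gcongr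
    _ = f x + ⟪fdGrad d f x ν, y - x⟫ + 3 / 2 * M * ‖y - x‖ ^ 2 := by ring

theorem nonpos_of_add_inner_fdGrad_add_nonpos (hf : Differentiable ℝ f)
    (hM : ∀ y, ‖gradient f y - gradient f x‖ ≤ M * ‖y - x‖) {l : ℝ}
    (hball : ∀ y, ‖y - x‖ ≤ l → f y ≤ 0) (hν : ν ≠ 0) (hνl : √d * |ν| ≤ 2 * l)
    {y : EuclideanSpace ℝ (Fin d)}
    (hy : f x + ⟪fdGrad d f x ν, y - x⟫ + 3 / 2 * M * ‖y - x‖ ^ 2 ≤ 0) :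
    f y ≤ 0 := by
  rcases le_total ‖y - x‖ l with hnear | hfar
  · exact hball y hnear
  · exact (le_add_inner_fdGrad_add hf hM hν (by linarith)).trans hy

end ForwardDifference

theorem ciInf_pos_of_finite {ι : Type*} [Finite ι] [Nonempty ι] {a : ι → ℝ} (ha : ∀ i, 0 < a i) :
    0 < ⨅ i, a i := by
  obtain ⟨i, hi⟩ := exists_eq_ciInf_of_finite (f := a)
  exact hi ▸ ha i

theorem stmt2 (d m : ℕ) (hd : 1 ≤ d) [NeZero m]
    (f : Fin m → EuclideanSpace ℝ (Fin d) → ℝ) (L M : Fin m → ℝ)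
    (hdiff : ∀ i, Differentiable ℝ (f i))
    (hL : ∀ i x₁ x₂, |f i x₁ - f i x₂| ≤ L i * ‖x₁ - x₂‖)
    (hM : ∀ i x₁ x₂, ‖gradient (f i) x₁ - gradient (f i) x₂‖ ≤ M i * ‖x₁ - x₂‖)
    (Lmax : ℝ) (hLmax : Lmax = ⨆ i, L i)
    (x₀ : EuclideanSpace ℝ (Fin d)) (hx₀ : ∀ i, f i x₀ < 0)
    (lstar νstar : ℝ)
    (hlstar : lstar = ⨅ i, (-(f i x₀)) / Lmax)
    (hνstar : νstar = 2 * lstar / Real.sqrt d) :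
    (⋂ i, {x : EuclideanSpace ℝ (Fin d) |
        f i x₀ + ⟪fdGrad d (f i) x₀ νstar, x - x₀⟫ + 2 * M i * ‖x - x₀‖ ^ 2 ≤ 0}) ⊆
      {x : EuclideanSpace ℝ (Fin d) | ∀ i, f i x ≤ 0} := by
  intro x hx i
  have hgrowth (y) : f i y ≤ f i x₀ + Lmax * ‖y - x₀‖ := by
    have hLi : L i * ‖y - x₀‖ ≤ Lmax * ‖y - x₀‖ := by
      gcongr
      exact hLmax ▸ Finite.le_ciSup L i
    linarith [(le_abs_self _).trans (hL i y x₀)]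
  rcases le_or_gt Lmax 0 with hLmax_nonpos | hLmax_pos
  · linarith [hgrowth x, hx₀ i, mul_nonpos_of_nonpos_of_nonneg hLmax_nonpos (norm_nonneg (x - x₀))]
  have hlstar_pos : 0 < lstar :=
    hlstar ▸ ciInf_pos_of_finite fun k ↦ div_pos (neg_pos.2 (hx₀ k)) hLmax_pos
  have hlstar_le : Lmax * lstar ≤ -f i x₀ :=
    (le_div_iff₀' hLmax_pos).1 (hlstar ▸ Finite.ciInf_le _ i)
  have hsqrt : 0 < √(d : ℝ) := Real.sqrt_pos.2 (by exact_mod_cast hd)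
  have hνstar_pos : 0 < νstar := hνstar ▸ by positivity
  have hstep : √d * |νstar| = 2 * lstar := by
    rw [abs_of_pos hνstar_pos, hνstar, mul_div_cancel₀ _ hsqrt.ne']
  refine nonpos_of_add_inner_fdGrad_add_nonpos (hdiff i) (hM i · x₀) (fun y hy ↦ ?_)
    hνstar_pos.ne' hstep.le (y := x) ?_
  · linarith [hgrowth y, mul_le_mul_of_nonneg_left hy hLmax_pos.le]
  · have hsafe := Set.mem_iInter.1 hx i
    have hcurvature := mul_nonneg ((norm_nonneg _).trans (hM i x x₀)) (norm_nonneg (x - x₀))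
    rw [Set.mem_ofPred_eq] at hsafe
    linarith
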